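/- Let {𝓘_{λ_i}^{n_i} : i ∈ J} be a family of semigroups, where each λ_i is an infinite cardinal and each n_i is a positive integer, and suppose each 𝓘_{λ_i}^{n_i} carries a feebly compact shift-continuous T₁-topology (so it is a feebly compact T₁-semitopological semigroup). Then the Tychonoff product ∏_{i∈J} 𝓘_{λ_i}^{n_i} is feebly compact. -/

import Mathlib

/-!
The product is feebly compact because sequential pracompactness implies feeble compactness and is
productive: tuples which differ from a fixed tuple in finitely many coordinates are dense, and a
sequence of them involves only countably many coordinates, so a diagonal argument applies.

For `𝓘_γ^n` the dense set is the set of isolated points. Sandwiching between rank-one idempotents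
shows that `{x | p ∈ x.graph}` is clopen for every pair `p`. Hence the up-set of each `α` is open,
and an element of an open set which is maximal there is isolated. A sequence of isolated points has
a subsequence whose graphs eventually decide every pair, because only countably many pairs occur.
By clopenness this subsequence has at most one cluster point, and feeble compactness then forces it
to converge.
-/

open Set Topology Filter

/-- The symmetric inverse semigroup `𝓘_γ^n` of partial bijections of the set `γ`
of rank `≤ n`, represented by their (finite) graphs. -/
structure SymInvSg (γ : Type*) (n : ℕ) where
  graph : Set (γ × γ)
  inj' : ∀ ⦃x y x' y'⦄, (x, y) ∈ graph → (x', y') ∈ graph → (x = x' ↔ y = y')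
  finite' : graph.Finite
  card_le' : graph.ncard ≤ n

namespace SymInvSg

variable {γ : Type*} {n : ℕ}

theorem ext' {a b : SymInvSg γ n} (h : a.graph = b.graph) : a = b := by
  cases a; cases b; simpa using h

/-- Composition of partial bijections (in the left-to-right convention of
transformation semigroups, the choice of convention being immaterial). -/
instance : Mul (SymInvSg γ n) where
  mul a b :=
    { graph := {p | ∃ y, (p.1, y) ∈ a.graph ∧ (y, p.2) ∈ b.graph}
      inj' := by
        rintro x z x' z' ⟨y, hxy, hyz⟩ ⟨y', hxy', hyz'⟩
        constructor
        · rintro rfl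
          have hy : y = y' := (a.inj' hxy hxy').mp rfl
          subst hy
          exact (b.inj' hyz hyz').mp rfl
        · rintro rfl
          have hy : y = y' := (b.inj' hyz hyz').mpr rfl
          subst hy
          exact (a.inj' hxy hxy').mpr rfl
      finite' := by
        have : {p : γ × γ | ∃ y, (p.1, y) ∈ a.graph ∧ (y, p.2) ∈ b.graph} ⊆
            (fun q : (γ × γ) × (γ × γ) => (q.1.1, q.2.2)) '' (a.graph ×ˢ b.graph) := by
          rintro ⟨x, z⟩ ⟨y, hxy, hyz⟩
          exact ⟨((x, y), (y, z)), ⟨hxy, hyz⟩, rfl⟩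
        exact Set.Finite.subset (Set.Finite.image _ (a.finite'.prod b.finite')) this
      card_le' := by
        have hinj : Set.InjOn Prod.fst
            {p : γ × γ | ∃ y, (p.1, y) ∈ a.graph ∧ (y, p.2) ∈ b.graph} := by
          rintro ⟨x, z⟩ ⟨y, hxy, hyz⟩ ⟨x', z'⟩ ⟨y', hxy', hyz'⟩ h
          simp only at h
          subst h
          have hy : y = y' := (a.inj' hxy hxy').mp rfl
          subst hy
          have hz : z = z' := (b.inj' hyz hyz').mp rfl
          simp [hz]
        calc ({p : γ × γ | ∃ y, (p.1, y) ∈ a.graph ∧ (y, p.2) ∈ b.graph}).ncard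
            ≤ (Prod.fst '' a.graph).ncard := by
              refine Set.ncard_le_ncard_of_injOn Prod.fst ?_ hinj (a.finite'.image _)
              rintro ⟨x, z⟩ hp
              exact ⟨(x, hp.choose), hp.choose_spec.1, rfl⟩
          _ ≤ a.graph.ncard := Set.ncard_image_le a.finite'
          _ ≤ n := a.card_le' }

theorem mul_graph (a b : SymInvSg γ n) :
    (a * b).graph = {p : γ × γ | ∃ y, (p.1, y) ∈ a.graph ∧ (y, p.2) ∈ b.graph} := rfl

instance : Semigroup (SymInvSg γ n) where
  mul_assoc a b c := by
    refine ext' ?_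
    simp only [mul_graph]
    ext ⟨x, w⟩
    constructor
    · rintro ⟨z, ⟨y, hxy, hyz⟩, hzw⟩
      exact ⟨y, hxy, z, hyz, hzw⟩
    · rintro ⟨y, hxy, z, hyz, hzw⟩
      exact ⟨z, ⟨y, hxy, hyz⟩, hzw⟩

/-- The zero of `𝓘_γ^n` is the empty partial map. -/
instance : Zero (SymInvSg γ n) :=
  ⟨{ graph := ∅
     inj' := by simp
     finite' := Set.finite_empty
     card_le' := by simp }⟩

/-- The natural partial order on the inverse semigroup `𝓘_γ^n`:
`α ≼ β` iff the graph of `α` is contained in the graph of `β`. -/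
instance : PartialOrder (SymInvSg γ n) where
  le a b := a.graph ⊆ b.graph
  le_refl a := subset_rfl
  le_trans a b c h₁ h₂ := Set.Subset.trans h₁ h₂
  le_antisymm a b h₁ h₂ := ext' (subset_antisymm h₁ h₂)

/-- The rank of a partial bijection: the cardinality of its domain
(equivalently, of its graph). -/
noncomputable def rank (a : SymInvSg γ n) : ℕ := a.graph.ncard

/-- `𝓘_A^n`: the subsemigroup of partial bijections with domain and range inside `A`. -/
def restrictedTo (A : Set γ) : Set (SymInvSg γ n) :=
  {α | ∀ p ∈ α.graph, p.1 ∈ A ∧ p.2 ∈ A}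

end SymInvSg

/-- A topology is shift-continuous when all left and right translations are continuous,
i.e. the space is a semitopological semigroup. -/
def ShiftContinuous (X : Type*) [TopologicalSpace X] [Mul X] : Prop :=
  ∀ a : X, Continuous (fun x => a * x) ∧ Continuous (fun x => x * a)

/-- A space is feebly compact if every locally finite family of nonempty open sets is finite. -/
def FeeblyCompact (X : Type*) [TopologicalSpace X] : Prop :=
  ∀ F : Set (Set X), (∀ U ∈ F, IsOpen U ∧ U.Nonempty) →
    LocallyFinite (fun U : F => (U : Set X)) → F.Finite

/-- A space is sequentially pracompact if it has a dense subset `D` such that every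
sequence in `D` has a convergent subsequence. -/
def SequentiallyPracompact (X : Type*) [TopologicalSpace X] : Prop :=
  ∃ D : Set X, Dense D ∧ ∀ u : ℕ → X, (∀ k, u k ∈ D) →
    ∃ (x : X) (φ : ℕ → ℕ), StrictMono φ ∧ Filter.Tendsto (u ∘ φ) Filter.atTop (nhds x)

/-- A space is totally countably pracompact if it has a dense subset `D` such that every
sequence in `D` has a subsequence whose closure is compact. -/
def TotallyCountablyPracompact (X : Type*) [TopologicalSpace X] : Prop :=
  ∃ D : Set X, Dense D ∧ ∀ u : ℕ → X, (∀ k, u k ∈ D) →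
    ∃ φ : ℕ → ℕ, StrictMono φ ∧ IsCompact (closure (Set.range (u ∘ φ)))

/-- A space is countably pracompact if it has a dense subset `A` such that every infinite
subset of `A` has an accumulation point in the space. -/
def CountablyPracompact (X : Type*) [TopologicalSpace X] : Prop :=
  ∃ A : Set X, Dense A ∧ ∀ B ⊆ A, B.Infinite → ∃ x : X, AccPt x (Filter.principal B)

/-- A space is ω-bounded-pracompact if it has a dense subset `D` such that every countable
subset of `D` has compact closure. -/
def OmegaBoundedPracompact (X : Type*) [TopologicalSpace X] : Prop :=
  ∃ D : Set X, Dense D ∧ ∀ C ⊆ D, C.Countable → IsCompact (closure C)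

/-- A space is feebly ω-bounded if for every sequence of nonempty open sets there is a
compact set meeting all of them. -/
def FeeblyOmegaBounded (X : Type*) [TopologicalSpace X] : Prop :=
  ∀ U : ℕ → Set X, (∀ k, IsOpen (U k) ∧ (U k).Nonempty) →
    ∃ K : Set X, IsCompact K ∧ ∀ k, (K ∩ U k).Nonempty

section Subsequences

variable {ι : Type*}

theorem exists_subseq_forall_tendsto [Countable ι] {X : ι → Type*} [∀ i, TopologicalSpace (X i)]
    {u : ∀ i, ℕ → X i}
    (h : ∀ i (φ : ℕ → ℕ), StrictMono φ →
      ∃ (x : X i) (ψ : ℕ → ℕ), StrictMono ψ ∧ Tendsto (u i ∘ φ ∘ ψ) atTop (𝓝 x)) :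
    ∃ φ : ℕ → ℕ, StrictMono φ ∧ ∀ i, ∃ x, Tendsto (u i ∘ φ) atTop (𝓝 x) := by
  cases isEmpty_or_nonempty ι
  · exact ⟨id, strictMono_id, isEmptyElim⟩
  obtain ⟨e, he⟩ := exists_surjective_nat ι
  choose lim ψ hψ hlim using h
  let Φ : ℕ → {φ : ℕ → ℕ // StrictMono φ} := fun m =>
    Nat.rec ⟨id, strictMono_id⟩ (fun m φ => ⟨φ.1 ∘ ψ (e m) φ.1 φ.2, φ.2.comp (hψ _ _ _)⟩) m
  have hanti : Antitone fun m => map (Φ m).1 atTop := antitone_nat_of_succ_le fun m => by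
    change map ((Φ m).1 ∘ _) atTop ≤ _
    rw [← map_map]
    exact map_mono (hψ _ _ _).tendsto_atTop
  -- Up to finitely many terms, a sequence tending to `F` takes values in the range of every `Φ m`;
  -- this replaces the explicit diagonal sequence.
  let F : Filter ℕ := ⨅ m, map (Φ m).1 atTop
  have : F.NeBot := iInf_neBot_of_directed hanti.directed_ge fun m => inferInstance
  obtain ⟨θ, hθ⟩ := exists_seq_tendsto F
  have hθ_map (m : ℕ) : Tendsto θ atTop (map (Φ m).1 atTop) := hθ.mono_right (iInf_le _ m)
  obtain ⟨χ, hχ, hθχ⟩ := strictMono_subseq_of_tendsto_atTop (by simpa [Φ] using hθ_map 0)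
  refine ⟨θ ∘ χ, hθχ, fun i => ?_⟩
  obtain ⟨m, rfl⟩ := he i
  have hlim_map : Tendsto (u (e m)) (map (Φ (m + 1)).1 atTop) (𝓝 _) :=
    tendsto_map'_iff.2 (hlim (e m) (Φ m).1 (Φ m).2)
  exact ⟨_, hlim_map.comp ((hθ_map (m + 1)).comp hχ.tendsto_atTop)⟩

theorem exists_subseq_forall_eventually_mem_or_notMem {s : ℕ → Set ι}
    (hs : ∀ k, (s k).Countable) :
    ∃ φ : ℕ → ℕ, StrictMono φ ∧
      ∀ i, (∀ᶠ k in atTop, i ∈ s (φ k)) ∨ ∀ᶠ k in atTop, i ∉ s (φ k) := by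
  classical
  have : Countable (⋃ k, s k) := (countable_iUnion hs).to_subtype
  obtain ⟨g, φ, hφ, hg⟩ :=
    CompactSpace.tendsto_subseq fun k (i : ⋃ k, s k) => decide (i.1 ∈ s k)
  refine ⟨φ, hφ, fun i => ?_⟩
  by_cases hi : i ∈ ⋃ k, s k
  · have hgi : ∀ᶠ k in atTop, decide (i ∈ s (φ k)) = g ⟨i, hi⟩ := by
      simpa [nhds_discrete] using tendsto_pi_nhds.1 hg ⟨i, hi⟩
    cases hb : g ⟨i, hi⟩
    · exact .inr (hgi.mono fun k hk => by simpa [hb] using hk)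
    · exact .inl (hgi.mono fun k hk => by simpa [hb] using hk)
  · exact .inr (.of_forall fun k hk => hi (mem_iUnion_of_mem _ hk))

end Subsequences

section FeeblyCompact

variable {X : Type*} [TopologicalSpace X]

theorem feeblyCompact_iff_forall_seq_not_locallyFinite :
    FeeblyCompact X ↔
      ∀ U : ℕ → Set X, (∀ k, IsOpen (U k)) → (∀ k, (U k).Nonempty) → ¬ LocallyFinite U := by
  constructor
  · intro h U hUo hUne hU
    have : Finite (range U) :=
      h _ (forall_mem_range.2 fun k => ⟨hUo k, hUne k⟩) hU.on_range
    obtain ⟨⟨_, l, rfl⟩, hinf⟩ := Finite.exists_infinite_fiber (rangeFactorization U)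
    obtain ⟨x, hx⟩ := hUne l
    refine infinite_coe_iff.1 hinf ((hU.point_finite x).subset fun k hk => ?_)
    have hkl : U k = U l := congrArg Subtype.val hk
    exact hkl.symm.subset hx
  · intro h F hF hlf
    by_contra hinf
    let U : ℕ ↪ F := Set.Infinite.natEmbedding F hinf
    exact h (fun k => U k) (fun k => (hF _ (U k).2).1) (fun k => (hF _ (U k).2).2)
      (hlf.comp_injective U.injective)

theorem FeeblyCompact.exists_mapClusterPt_of_isOpen_singleton (hX : FeeblyCompact X)
    {u : ℕ → X} (hu : ∀ k, IsOpen {u k}) : ∃ x, MapClusterPt x atTop u := by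
  by_contra! hno
  refine feeblyCompact_iff_forall_seq_not_locallyFinite.1 hX (fun k => {u k}) hu
    (fun k => singleton_nonempty _) fun x => ?_
  obtain ⟨N, hN, hNu⟩ : ∃ N ∈ 𝓝 x, ¬ ∃ᶠ k in atTop, u k ∈ N := by
    simpa only [mapClusterPt_iff_frequently, not_forall, exists_prop] using hno x
  refine ⟨N, hN, ?_⟩
  simpa only [singleton_inter_nonempty, Nat.frequently_atTop_iff_infinite, not_infinite] using hNu

theorem FeeblyCompact.exists_tendsto_of_mapClusterPt_unique (hX : FeeblyCompact X) {u : ℕ → X}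
    (hu : ∀ k, IsOpen {u k})
    (huniq : ∀ x y, MapClusterPt x atTop u → MapClusterPt y atTop u → x = y) :
    ∃ x, Tendsto u atTop (𝓝 x) := by
  obtain ⟨x, hx⟩ := hX.exists_mapClusterPt_of_isOpen_singleton hu
  refine ⟨x, fun W hW => ?_⟩
  by_contra hfreq
  obtain ⟨φ, hφ, hφW⟩ := extraction_of_frequently_atTop (not_eventually.1 hfreq)
  obtain ⟨y, hy⟩ := hX.exists_mapClusterPt_of_isOpen_singleton fun k => hu (φ k)
  obtain rfl : x = y := huniq x y hx (hy.of_comp hφ.tendsto_atTop)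
  obtain ⟨k, hk⟩ := (hy.frequently hW).exists
  exact hφW k hk

theorem FeeblyCompact.sequentiallyPracompact_of_isClopen (hX : FeeblyCompact X)
    (hdense : Dense {x : X | IsOpen {x}}) {ι : Type*} {C : ι → Set X} (hC : ∀ i, IsClopen (C i))
    (hsep : ∀ x y, (∀ i, x ∈ C i ↔ y ∈ C i) → x = y) (hcount : ∀ x, {i | x ∈ C i}.Countable) :
    SequentiallyPracompact X := by
  refine ⟨_, hdense, fun u hu => ?_⟩
  obtain ⟨φ, hφ, hdecided⟩ := exists_subseq_forall_eventually_mem_or_notMem fun k => hcount (u k)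
  have hcluster {x : X} (hx : MapClusterPt x atTop (u ∘ φ)) (i : ι) :
      x ∈ C i ↔ ∀ᶠ k in atTop, u (φ k) ∈ C i := by
    refine ⟨fun hxi => (hdecided i).resolve_right ?_, (hC i).isClosed.mem_of_mapClusterPt hx⟩
    exact hx.frequently ((hC i).isOpen.mem_nhds hxi)
  obtain ⟨x, hx⟩ := hX.exists_tendsto_of_mapClusterPt_unique (fun k => hu (φ k))
    fun x y hx hy => hsep x y fun i => (hcluster hx i).trans (hcluster hy i).symm
  exact ⟨x, φ, hφ, hx⟩

theorem SequentiallyPracompact.feeblyCompact (hX : SequentiallyPracompact X) :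
    FeeblyCompact X := by
  obtain ⟨D, hD, hseq⟩ := hX
  refine feeblyCompact_iff_forall_seq_not_locallyFinite.2 fun U hUo hUne hU => ?_
  choose u huU huD using fun k => hD.inter_open_nonempty (U k) (hUo k) (hUne k)
  obtain ⟨x, φ, hφ, hx⟩ := hseq u huD
  obtain ⟨N, hN, hfin⟩ := hU x
  have hfreq : ∃ᶠ k in atTop, (U k ∩ N).Nonempty :=
    hφ.tendsto_atTop.frequently
      ((hx.eventually hN).frequently.mono fun k hk => ⟨u (φ k), huU _, hk⟩)
  exact Nat.frequently_atTop_iff_infinite.1 hfreq hfin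

end FeeblyCompact

theorem dense_setOf_finite_ne_pi {ι : Type*} {X : ι → Type*} [∀ i, TopologicalSpace (X i)]
    {D : ∀ i, Set (X i)} (hD : ∀ i, Dense (D i)) {d : ∀ i, X i} (hd : ∀ i, d i ∈ D i) :
    Dense {x : ∀ i, X i | (∀ i, x i ∈ D i) ∧ {i | x i ≠ d i}.Finite} := by
  classical
  refine dense_iff_inter_open.2 fun U hU hne => ?_
  obtain ⟨x, hxU, hxD⟩ := (dense_pi univ fun i _ => hD i).inter_open_nonempty U hU hne
  obtain ⟨I, hI⟩ := exists_finset_piecewise_mem_of_mem_nhds (hU.mem_nhds hxU) d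
  refine ⟨I.piecewise x d, hI, fun i => ?_, I.finite_toSet.subset fun i hi => ?_⟩
  · exact I.piecewise_cases x d (· ∈ D i) (hxD i trivial) (hd i)
  · by_contra hiI
    exact hi (I.piecewise_eq_of_notMem x d hiI)

theorem SequentiallyPracompact.pi {ι : Type*} {X : ι → Type*} [∀ i, TopologicalSpace (X i)]
    (hX : ∀ i, SequentiallyPracompact (X i)) : SequentiallyPracompact (∀ i, X i) := by
  choose D hD hseq using hX
  cases isEmpty_or_nonempty (∀ i, X i) with
  | inl _ => exact ⟨univ, dense_univ, fun u => isEmptyElim (u 0)⟩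
  | inr hne =>
    have (i : ι) : Nonempty (X i) := hne.map (· i)
    choose d hd using fun i => (hD i).nonempty
    refine ⟨_, dense_setOf_finite_ne_pi hD hd, fun u hu => ?_⟩
    let S : Set ι := ⋃ k, {i | u k i ≠ d i}
    have : Countable S := (countable_iUnion fun k => (hu k).2.countable).to_subtype
    obtain ⟨φ, hφ, hφS⟩ := exists_subseq_forall_tendsto (u := fun (i : S) k => u k i)
      fun i φ _ => hseq i (fun k => u (φ k) i) fun k => (hu (φ k)).1 i
    have hlim (i : ι) : ∃ x, Tendsto (fun k => u (φ k) i) atTop (𝓝 x) := by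
      by_cases hi : i ∈ S
      · exact hφS ⟨i, hi⟩
      · have hconst (k : ℕ) : u (φ k) i = d i := by
          by_contra hk
          exact hi (mem_iUnion_of_mem (φ k) hk)
        exact ⟨d i, by simp only [hconst, tendsto_const_nhds]⟩
    choose x hx using hlim
    exact ⟨x, φ, hφ, tendsto_pi_nhds.2 hx⟩

theorem dense_setOf_isOpen_singleton_of_isOpen_Ici {X : Type*} [TopologicalSpace X]
    [PartialOrder X] [WellFoundedGT X] (h : ∀ x : X, IsOpen (Ici x)) :
    Dense {x : X | IsOpen {x}} := by
  refine dense_iff_inter_open.2 fun U hU hne => ?_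
  obtain ⟨x, hx⟩ := exists_maximal_of_wellFoundedGT (· ∈ U) hne
  have hsingle : U ∩ Ici x = {x} :=
    eq_singleton_iff_unique_mem.2
      ⟨⟨hx.prop, le_rfl⟩, fun y hy => (hx.eq_of_le hy.1 hy.2).symm⟩
  have hopen : IsOpen {x} := hsingle ▸ hU.inter (h x)
  exact ⟨x, hx.prop, hopen⟩

namespace SymInvSg

variable {γ : Type*} {n : ℕ}

theorem graph_injective : Function.Injective (graph : SymInvSg γ n → Set (γ × γ)) :=
  fun _ _ => ext'

theorem rank_strictMono : StrictMono (rank : SymInvSg γ n → ℕ) :=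
  fun _ b hab => ncard_lt_ncard hab b.finite'

instance : WellFoundedGT (SymInvSg γ n) :=
  StrictMono.wellFoundedGT (f := fun a => (⟨a.rank, Nat.lt_succ_of_le a.card_le'⟩ : Fin (n + 1)))
    fun _ _ hab => rank_strictMono hab

/-- The partial bijection of rank one sending `a` to `b`; for `a = b` these are the primitive
idempotents of `𝓘_γ^n`. -/
def single (hn : 0 < n) (a b : γ) : SymInvSg γ n where
  graph := {(a, b)}
  inj' := by
    rintro x y x' y' ⟨⟩ ⟨⟩
    exact iff_of_true rfl rfl
  finite' := finite_singleton _
  card_le' := by rwa [ncard_singleton]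

theorem graph_single (hn : 0 < n) (a b : γ) : (single hn a b).graph = {(a, b)} := rfl

theorem graph_zero : (0 : SymInvSg γ n).graph = ∅ := rfl

theorem graph_single_mul_mul_single (hn : 0 < n) (a b : γ) (x : SymInvSg γ n) :
    (single hn a a * x * single hn b b).graph = x.graph ∩ {(a, b)} := by
  ext ⟨c, d⟩
  simp only [mul_graph, graph_single, mem_ofPred_eq, mem_singleton_iff, Prod.mk.injEq,
    mem_inter_iff]
  grind

section ShiftContinuous

variable [TopologicalSpace (SymInvSg γ n)] [T1Space (SymInvSg γ n)]

theorem isClopen_setOf_mem_graph (hsc : ShiftContinuous (SymInvSg γ n)) (p : γ × γ) :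
    IsClopen {x : SymInvSg γ n | p ∈ x.graph} := by
  obtain hn | hn := n.eq_zero_or_pos
  · have hempty (x : SymInvSg γ n) : x.graph = ∅ :=
      (ncard_eq_zero x.finite').1 (by have := x.card_le'; omega)
    simp [hempty, isClopen_empty]
  obtain ⟨a, b⟩ := p
  let f : SymInvSg γ n → SymInvSg γ n := fun x => single hn a a * x * single hn b b
  have hf : Continuous f := (hsc _).2.comp (hsc _).1
  have hmem : {x : SymInvSg γ n | (a, b) ∈ x.graph} = f ⁻¹' {single hn a b} := by
    ext x
    simp [f, ← graph_injective.eq_iff, graph_single_mul_mul_single, graph_single]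
  have hnotMem : {x : SymInvSg γ n | (a, b) ∈ x.graph}ᶜ = f ⁻¹' {0} := by
    ext x
    simp [f, ← graph_injective.eq_iff, graph_single_mul_mul_single, graph_zero]
  constructor
  · rw [hmem]
    exact isClosed_singleton.preimage hf
  · rw [← isClosed_compl_iff, hnotMem]
    exact isClosed_singleton.preimage hf

theorem isOpen_Ici (hsc : ShiftContinuous (SymInvSg γ n)) (a : SymInvSg γ n) :
    IsOpen (Ici a) := by
  have hIci : Ici a = ⋂ p ∈ a.graph, {x : SymInvSg γ n | p ∈ x.graph} := by
    ext x
    simp only [mem_iInter]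
    rfl
  rw [hIci]
  exact a.finite'.isOpen_biInter fun p _ => (isClopen_setOf_mem_graph hsc p).isOpen

theorem sequentiallyPracompact (hsc : ShiftContinuous (SymInvSg γ n))
    (hfc : FeeblyCompact (SymInvSg γ n)) : SequentiallyPracompact (SymInvSg γ n) :=
  hfc.sequentiallyPracompact_of_isClopen
    (dense_setOf_isOpen_singleton_of_isOpen_Ici (isOpen_Ici hsc))
    (isClopen_setOf_mem_graph hsc) (fun _ _ h => ext' (Set.ext h)) fun x => x.finite'.countable

end ShiftContinuous

end SymInvSg

theorem feeblyCompact_pi_general {J : Type*} {γ : J → Type*} {n : J → ℕ}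
    [∀ i, TopologicalSpace (SymInvSg (γ i) (n i))] [∀ i, T1Space (SymInvSg (γ i) (n i))]
    (hsc : ∀ i, ShiftContinuous (SymInvSg (γ i) (n i)))
    (hfc : ∀ i, FeeblyCompact (SymInvSg (γ i) (n i))) :
    FeeblyCompact (∀ i, SymInvSg (γ i) (n i)) :=
  (SequentiallyPracompact.pi fun i =>
    SymInvSg.sequentiallyPracompact (hsc i) (hfc i)).feeblyCompact

/-- A Tychonoff product of feebly compact `T₁`-semitopological semigroups
`𝓘_{λ_i}^{n_i}` is feebly compact. -/
theorem feeblyCompact_pi {J : Type*} {γ : J → Type*} [∀ i, Infinite (γ i)] {n : J → ℕ}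
    (hn : ∀ i, 0 < n i)
    [∀ i, TopologicalSpace (SymInvSg (γ i) (n i))] [∀ i, T1Space (SymInvSg (γ i) (n i))]
    (hsc : ∀ i, ShiftContinuous (SymInvSg (γ i) (n i)))
    (hfc : ∀ i, FeeblyCompact (SymInvSg (γ i) (n i))) :
    FeeblyCompact (∀ i, SymInvSg (γ i) (n i)) :=
  feeblyCompact_pi_general hsc hfc
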